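/- Let E be a real inner product space, β > 0, and η ≥ 1/(2β). For t = 0,...,T let ℓ_t : E → ℝ be convex, differentiable, nonnegative and β-smooth, and suppose there exists w* ∈ E with ℓ_t(w*) = 0 for all t (perfect interpolation). Generate iterates by the ALI-G update: w_{t+1} = w_t − γ_t η ∇ℓ_t(w_t) with γ_t = min{1, ℓ_t(w_t)/(η‖∇ℓ_t(w_t)‖²)}. Then (1/(T+1)) Σ_{t=0}^T ℓ_t(w_t) ≤ 2β‖w_0 − w*‖²/(T+1). -/

import Mathlib

/-!
With `s = γ η = min η (ℓ / ‖g‖²)` the effective step length at `w` and `g` the gradient there,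
expanding the square and using convexity at the common zero `w*` gives
`‖w⁺ - w*‖² ≤ ‖w - w*‖² - 2 s ℓ(w) + s² ‖g‖²`. Since `s ‖g‖² ≤ ℓ(w)`, the squared distance drops
by at least `s ℓ(w)`. Nonnegativity and smoothness give `‖g‖² ≤ 2 β ℓ(w)`
(`sq_norm_grad_le`), so together with `η ≥ 1 / (2 β)` we have `s ≥ 1 / (2 β)`: the loss at each step
is at most `2 β` times the drop of the squared distance. Summing telescopes. If `g = 0`, convexity
forces `ℓ(w) = 0` and there is nothing to prove.
-/

/-- The self-bounding property of nonnegative smooth functions: one gradient step of length `1 / β`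
decreases `f` by at least `‖∇f‖² / (2 β)`, yet `f` stays nonnegative. -/
lemma sq_norm_grad_le {E : Type*} [NormedAddCommGroup E] [InnerProductSpace ℝ E]
    {β : ℝ} (hβ : 0 < β) {f : E → ℝ} {g : E → E}
    (hgrad : ∀ x : E, HasFDerivAt f (innerSL ℝ (g x)) x)
    (hsmooth : ∀ x y : E, ‖g x - g y‖ ≤ β * ‖x - y‖)
    (hnonneg : ∀ x : E, 0 ≤ f x) (x : E) :
    ‖g x‖ ^ 2 ≤ 2 * β * f x := by
  set v := g x with hv
  have hline : ∀ t : ℝ, HasDerivAt (fun t : ℝ => x - t • v) (-v) t := fun t => by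
    simpa using ((hasDerivAt_id t).smul_const v).const_sub x
  have hφ : ∀ t : ℝ, HasDerivAt (fun t : ℝ => f (x - t • v)) (-inner ℝ (g (x - t • v)) v) t :=
    fun t => by
      have h := (hgrad (x - t • v)).comp_hasDerivAt t (hline t)
      rw [innerSL_apply_apply, inner_neg_right] at h
      exact h
  -- `f (x - t v)` minus its quadratic upper model is antitone in `t ≥ 0`.
  have hψ : ∀ t : ℝ, HasDerivAt
      (fun t : ℝ => f (x - t • v) + t * ‖v‖ ^ 2 - t ^ 2 * (β / 2 * ‖v‖ ^ 2))
      (-inner ℝ (g (x - t • v)) v + 1 * ‖v‖ ^ 2 - 2 * t * (β / 2 * ‖v‖ ^ 2)) t := fun t => by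
    have h1 := (hasDerivAt_id t).mul_const (‖v‖ ^ 2)
    have h2 := (hasDerivAt_pow 2 t).mul_const (β / 2 * ‖v‖ ^ 2)
    norm_num at h2
    exact ((hφ t).add h1).sub h2
  have hanti : AntitoneOn
      (fun t : ℝ => f (x - t • v) + t * ‖v‖ ^ 2 - t ^ 2 * (β / 2 * ‖v‖ ^ 2)) (Set.Ici 0) := by
    refine antitoneOn_of_deriv_nonpos (convex_Ici 0)
      (fun t _ => (hψ t).continuousAt.continuousWithinAt)
      (fun t _ => (hψ t).differentiableAt.differentiableWithinAt) fun t ht => ?_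
    rw [interior_Ici, Set.mem_Ioi] at ht
    rw [(hψ t).deriv]
    have h1 : inner ℝ (v - g (x - t • v)) v ≤ ‖v - g (x - t • v)‖ * ‖v‖ :=
      real_inner_le_norm _ _
    have h2 : ‖v - g (x - t • v)‖ ≤ β * (t * ‖v‖) := by
      have := hsmooth x (x - t • v)
      rwa [sub_sub_cancel, norm_smul, Real.norm_of_nonneg ht.le] at this
    have h3 := mul_le_mul_of_nonneg_right h2 (norm_nonneg v)
    rw [inner_sub_left, real_inner_self_eq_norm_sq] at h1
    linarith
  have h := hanti (Set.mem_Ici.2 le_rfl) (Set.mem_Ici.2 (inv_pos.2 hβ).le) (inv_pos.2 hβ).le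
  have h0 := hnonneg (x - β⁻¹ • v)
  simp only [zero_smul, sub_zero, zero_mul, ne_eq, OfNat.ofNat_ne_zero, not_false_eq_true,
    zero_pow, add_zero] at h
  have h4 : β⁻¹ * ‖v‖ ^ 2 - β⁻¹ ^ 2 * (β / 2 * ‖v‖ ^ 2) = ‖v‖ ^ 2 / (2 * β) := by
    field_simp
    ring
  have h5 : ‖v‖ ^ 2 / (2 * β) ≤ f x := by linarith
  rw [div_le_iff₀ (by positivity)] at h5
  linarith

/-- First-order lower bound for a convex function, from its restriction to a line. -/
lemma convex_grad_le {E : Type*} [NormedAddCommGroup E] [InnerProductSpace ℝ E]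
    {f : E → ℝ} {v x : E} (hgrad : HasFDerivAt f (innerSL ℝ v) x)
    (hconv : ConvexOn ℝ Set.univ f) (y : E) :
    f x + inner ℝ v (y - x) ≤ f y := by
  have hd : HasDerivAt (f ∘ AffineMap.lineMap (k := ℝ) x y) (inner ℝ v (y - x)) 0 := by
    have h := AffineMap.hasDerivAt_lineMap (𝕜 := ℝ) (a := x) (b := y) (x := 0)
    have hg : HasFDerivAt f (innerSL ℝ v) (AffineMap.lineMap (k := ℝ) x y 0) := by simpa using hgrad
    simpa using hg.comp_hasDerivAt (0 : ℝ) h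
  have hc : ConvexOn ℝ Set.univ (f ∘ AffineMap.lineMap (k := ℝ) x y) :=
    hconv.comp_affineMap (AffineMap.lineMap x y)
  have h := hc.le_slope_of_hasDerivAt (Set.mem_univ 0) (Set.mem_univ 1) zero_lt_one hd
  simp only [slope_def_field, Function.comp_apply, AffineMap.lineMap_apply_zero,
    AffineMap.lineMap_apply_one, sub_zero, div_one] at h
  linarith

/-- One ALI-G step: `L` is the loss at `u`, `v` its gradient there and `z` the common
zero of the losses, so that `hv` is self-bounding and `hc` is convexity between `u` and `z`. -/
lemma alig_step {E : Type*} [NormedAddCommGroup E] [InnerProductSpace ℝ E]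
    {η β L : ℝ} {u v z : E} (hβ : 0 < β) (hη : 1 / (2 * β) ≤ η) (hL : 0 ≤ L)
    (hv : ‖v‖ ^ 2 ≤ 2 * β * L) (hc : L ≤ inner ℝ (u - z) v) :
    L ≤ 2 * β * (‖u - z‖ ^ 2 - ‖u - (min 1 (L / (η * ‖v‖ ^ 2)) * η) • v - z‖ ^ 2) := by
  by_cases h0 : v = 0
  · subst h0
    simpa using hc
  have hη0 : 0 < η := lt_of_lt_of_le (by positivity) hη
  have hn : 0 < ‖v‖ ^ 2 := by positivity
  have hs : min 1 (L / (η * ‖v‖ ^ 2)) * η = min η (L / ‖v‖ ^ 2) := by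
    rw [min_mul_of_nonneg _ _ hη0.le, one_mul]
    congr 1
    field_simp
  rw [hs]
  set s := min η (L / ‖v‖ ^ 2) with hsdef
  have hs1 : s * ‖v‖ ^ 2 ≤ L := (le_div_iff₀ hn).1 (min_le_right _ _)
  have hs2 : 1 / (2 * β) ≤ s := by
    refine le_min hη ?_
    rw [div_le_div_iff₀ (by positivity) hn]
    linarith
  have hs0 : 0 ≤ s := le_trans (by positivity) hs2
  have hs3 : 1 ≤ 2 * β * s := by
    rw [div_le_iff₀ (by positivity)] at hs2
    linarith
  have hexp : ‖u - s • v - z‖ ^ 2 = ‖u - z‖ ^ 2 - 2 * (s * inner ℝ (u - z) v)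
      + s * (s * ‖v‖ ^ 2) := by
    rw [sub_right_comm, norm_sub_sq_real, inner_smul_right, norm_smul, Real.norm_of_nonneg hs0]
    ring
  have h1 := mul_le_mul_of_nonneg_left hc hs0
  have h2 := mul_le_mul_of_nonneg_left hs1 hs0
  calc L ≤ 2 * β * s * L := le_mul_of_one_le_left hL hs3
    _ = 2 * β * (s * L) := by ring
    _ ≤ _ := mul_le_mul_of_nonneg_left (by linarith) (by positivity)


/-- **ALI-G convergence rate, convex and smooth case with large `η`.** Under perfect
interpolation and `η ≥ 1/(2β)`, the averaged loss of the ALI-G iterates satisfies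
`(1/(T+1)) Σ_{t=0}^T ℓ_t(w_t) ≤ 2β‖w₀ − w*‖²/(T+1)`. -/
theorem alig_convex_smooth_large_eta_rate {E : Type*} [NormedAddCommGroup E]
    [InnerProductSpace ℝ E]
    (η β : ℝ) (hβ : 0 < β) (hη : 1 / (2 * β) ≤ η) (T : ℕ)
    (ℓ : ℕ → E → ℝ) (gℓ : ℕ → E → E)
    (hgrad : ∀ t, ∀ x : E, HasFDerivAt (ℓ t) (innerSL ℝ (gℓ t x)) x)
    (hconv : ∀ t, ConvexOn ℝ Set.univ (ℓ t))
    (hsmooth : ∀ t, ∀ x y : E, ‖gℓ t x - gℓ t y‖ ≤ β * ‖x - y‖)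
    (hnonneg : ∀ t, ∀ x : E, 0 ≤ ℓ t x)
    (wstar : E) (hinterp : ∀ t, ℓ t wstar = 0)
    (w : ℕ → E)
    (hstep : ∀ t, w (t + 1)
      = w t - (min 1 (ℓ t (w t) / (η * ‖gℓ t (w t)‖ ^ 2)) * η) • gℓ t (w t)) :
    (1 / ((T : ℝ) + 1)) * ∑ t ∈ Finset.range (T + 1), ℓ t (w t)
      ≤ 2 * β * ‖w 0 - wstar‖ ^ 2 / ((T : ℝ) + 1) := by
  have key : ∀ t, ℓ t (w t) ≤ 2 * β * ‖w t - wstar‖ ^ 2 - 2 * β * ‖w (t + 1) - wstar‖ ^ 2 := by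
    intro t
    have hc : ℓ t (w t) ≤ inner ℝ (w t - wstar) (gℓ t (w t)) := by
      have h := convex_grad_le (hgrad t (w t)) (hconv t) wstar
      rw [hinterp, ← neg_sub, inner_neg_right, real_inner_comm] at h
      linarith
    rw [hstep t, ← mul_sub]
    exact alig_step hβ hη (hnonneg t _)
      (sq_norm_grad_le hβ (hgrad t) (hsmooth t) (hnonneg t) _) hc
  have hsum := Finset.sum_le_sum fun t (_ : t ∈ Finset.range (T + 1)) => key t
  rw [Finset.sum_range_sub' fun t => 2 * β * ‖w t - wstar‖ ^ 2] at hsum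
  have hT : 0 ≤ 2 * β * ‖w (T + 1) - wstar‖ ^ 2 := by positivity
  rw [one_div_mul_eq_div]
  gcongr
  linarith
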